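/- arXiv:1201.2718 — 2 statements merged into one kernel-verified Lean document; each statement's English description precedes it below -/
import Mathlib

section
/- For every natural number n ≥ 1 and every real x ≥ 0, the polynomial identity Σ_{k=0}^{n} C(2n, 2k) (1+x)^k x^(n−k) = Π_{k=1}^{n} (1 + x / sin²(π(2k−1)/(4n))) holds; in particular, the zeros of this degree-n polynomial are exactly the negative reals −sin²(π(2k−1)/(4n)), k = 1, …, n. -/
open Real Finset

/-! Both sides are polynomials in `x` of degree at most `n`, so it suffices that they agree at
`n + 1` distinct points. These are `0`, where both sides equal `1`, and `-sin² θ_k` for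
`θ_k = π (2k - 1) / (4n)`, `1 ≤ k ≤ n`. At `-sin² θ` the sum is the even part of the binomial
expansion of `(cos θ + i sin θ)^(2n)`, i.e. `cos (2nθ)` (`sum_choose_cos_sin`), which vanishes at
`θ = θ_k`; the product vanishes there because one of its factors does. The points are distinct
because the `θ_k` lie in `(0, π/2)`, where `sin` is positive and injective. -/

lemma sum_range_even_odd {M : Type*} [AddCommMonoid M] (f : ℕ → M) (n : ℕ) :
    ∑ m ∈ range (2 * n + 1), f m =
      ∑ k ∈ range (n + 1), f (2 * k) + ∑ k ∈ range n, f (2 * k + 1) := by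
  induction n with
  | zero => simp
  | succ n ih =>
    rw [show 2 * (n + 1) + 1 = 2 * n + 1 + 1 + 1 by ring, sum_range_succ, sum_range_succ, ih,
      sum_range_succ _ (n + 1), sum_range_succ _ n, sum_range_succ _ n]
    rw [show 2 * (n + 1) = 2 * n + 1 + 1 by ring]
    abel

/-- The odd terms of the two binomial expansions cancel. -/
lemma add_pow_add_sub_pow {R : Type*} [CommRing R] (a b : R) (n : ℕ) :
    (a + b) ^ (2 * n) + (a - b) ^ (2 * n) =
      2 * ∑ k ∈ range (n + 1), ((2 * n).choose (2 * k) : R) * (a ^ 2) ^ k * (b ^ 2) ^ (n - k) := by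
  rw [sub_eq_add_neg, add_pow, add_pow, ← sum_add_distrib, sum_range_even_odd, mul_sum]
  have hodd : ∑ k ∈ range n, (a ^ (2 * k + 1) * b ^ (2 * n - (2 * k + 1)) *
      ((2 * n).choose (2 * k + 1) : R) + a ^ (2 * k + 1) * (-b) ^ (2 * n - (2 * k + 1)) *
      ((2 * n).choose (2 * k + 1) : R)) = 0 := by
    refine sum_eq_zero fun k hk => ?_
    have hk := mem_range.mp hk
    rw [Odd.neg_pow (⟨n - k - 1, by omega⟩ : Odd (2 * n - (2 * k + 1)))]
    ring
  rw [hodd, add_zero]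
  refine sum_congr rfl fun k _ => ?_
  rw [← Nat.mul_sub, pow_mul, pow_mul, pow_mul, neg_sq]
  ring

lemma sum_choose_cos_sin (n : ℕ) (t : ℝ) :
    ∑ k ∈ range (n + 1), ((2 * n).choose (2 * k) : ℝ) * (1 + -sin t ^ 2) ^ k *
      (-sin t ^ 2) ^ (n - k) = cos (2 * n * t) := by
  have h := add_pow_add_sub_pow (Complex.cos t) (Complex.sin t * Complex.I) n
  have hneg : Complex.cos t - Complex.sin t * Complex.I =
      Complex.cos (-t) + Complex.sin (-t) * Complex.I := by
    rw [Complex.cos_neg, Complex.sin_neg]; ring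
  rw [hneg, Complex.cos_add_sin_mul_I_pow, Complex.cos_add_sin_mul_I_pow, mul_neg,
    Complex.cos_neg, Complex.sin_neg, mul_pow, Complex.I_sq] at h
  have h1 : (1 + -sin t ^ 2 : ℝ) = cos t ^ 2 := by rw [cos_sq']; ring
  rw [h1]
  apply Complex.ofReal_injective
  push_cast at h ⊢
  rw [mul_neg_one] at h
  linear_combination -h / 2

lemma Q_factorization_angle {n k : ℕ} (hk : k ∈ Finset.Icc 1 n) :
    0 < π * (2 * (k : ℝ) - 1) / (4 * n) ∧ π * (2 * (k : ℝ) - 1) / (4 * n) < π / 2 := by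
  obtain ⟨h1, h2⟩ := Finset.mem_Icc.mp hk
  have h1' : (1 : ℝ) ≤ k := by exact_mod_cast h1
  have h2' : (k : ℝ) ≤ n := by exact_mod_cast h2
  have hπ := pi_pos
  constructor
  · apply div_pos <;> nlinarith
  · rw [div_lt_div_iff₀ (by linarith) (by norm_num)]
    nlinarith

theorem Q_factorization (n : ℕ) (hn : 1 ≤ n) (x : ℝ) (hx : 0 ≤ x) :
    ∑ k ∈ Finset.range (n + 1),
        (Nat.choose (2 * n) (2 * k) : ℝ) * (1 + x) ^ k * x ^ (n - k) =
      ∏ k ∈ Finset.Icc 1 n,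
        (1 + x / Real.sin (Real.pi * (2 * (k : ℝ) - 1) / (4 * n)) ^ 2) := by
  have hn0 : (n : ℝ) ≠ 0 := by positivity
  set θ : ℕ → ℝ := fun k => π * (2 * (k : ℝ) - 1) / (4 * n) with hθ
  have hsin : ∀ k ∈ Finset.Icc 1 n, 0 < sin (θ k) := fun k hk =>
    sin_pos_of_pos_of_lt_pi (Q_factorization_angle hk).1
      (by have := (Q_factorization_angle hk).2; have := pi_pos; simp only [hθ]; linarith)
  let P : Polynomial ℝ := ∑ k ∈ range (n + 1),
    Polynomial.C ((2 * n).choose (2 * k) : ℝ) * (1 + Polynomial.X) ^ k * Polynomial.X ^ (n - k)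
  let R : Polynomial ℝ := ∏ k ∈ Finset.Icc 1 n,
    (1 + Polynomial.C ((sin (θ k) ^ 2)⁻¹) * Polynomial.X)
  have hP : ∀ y, P.eval y = ∑ k ∈ range (n + 1),
      ((2 * n).choose (2 * k) : ℝ) * (1 + y) ^ k * y ^ (n - k) := by
    intro y; simp [P, Polynomial.eval_finsetSum]
  have hR : ∀ y, R.eval y = ∏ k ∈ Finset.Icc 1 n, (1 + y / sin (θ k) ^ 2) := by
    intro y
    simp only [R, Polynomial.eval_prod]
    refine prod_congr rfl fun k _ => ?_
    simp [div_eq_inv_mul]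
  have hPd : P.degree ≤ n := by
    refine Polynomial.degree_le_of_natDegree_le
      (Polynomial.natDegree_sum_le_of_forall_le _ _ fun k hk => ?_)
    have hk := mem_range.mp hk
    have : n = 0 + k * 1 + (n - k) := by omega
    conv_rhs => rw [this]
    refine Polynomial.natDegree_mul_le_of_le (Polynomial.natDegree_mul_le_of_le (by simp)
      (Polynomial.natDegree_pow_le_of_le k ?_)) (Polynomial.natDegree_X_pow_le _)
    compute_degree
  have hRd : R.degree ≤ n := by
    refine Polynomial.degree_le_of_natDegree_le ((Polynomial.natDegree_prod_le _ _).trans ?_)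
    refine (sum_le_card_nsmul _ _ 1 fun k _ => ?_).trans (by simp)
    compute_degree
  -- the node with index `0` is the point `0`; the others are the common zeros
  let v : ℕ → ℝ := fun k => if k = 0 then 0 else -sin (θ k) ^ 2
  have hlt : ∀ {d : WithBot ℕ}, d ≤ n → d < (#(range (n + 1)) : ℕ) := fun h =>
    h.trans_lt (by rw [card_range]; exact_mod_cast Nat.lt_succ_self n)
  have hmem : ∀ {k}, k ∈ range (n + 1) → k ≠ 0 → k ∈ Finset.Icc 1 n := by
    intro k hk h0
    have := mem_range.mp hk
    exact Finset.mem_Icc.mpr ⟨by omega, by omega⟩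
  have hinj : Set.InjOn v (range (n + 1)) := by
    intro i hi j hj hij
    have hi := Finset.mem_coe.mp hi
    have hj := Finset.mem_coe.mp hj
    by_cases hi0 : i = 0 <;> by_cases hj0 : j = 0
    · rw [hi0, hj0]
    · have := hsin j (hmem hj hj0)
      simp [v, hi0, hj0, this.ne'] at hij
    · have := hsin i (hmem hi hi0)
      simp [v, hi0, hj0, this.ne'] at hij
    · have hi := hmem hi hi0
      have hj := hmem hj hj0
      simp only [v, hi0, hj0, if_false, neg_inj] at hij
      have hs := (pow_left_inj₀ (hsin i hi).le (hsin j hj).le two_ne_zero).mp hij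
      have hai := Q_factorization_angle hi
      have haj := Q_factorization_angle hj
      have hπ := pi_pos
      have he : θ i = θ j := injOn_sin
        ⟨by linarith, hai.2.le⟩ ⟨by linarith, haj.2.le⟩ hs
      simp only [hθ] at he
      field_simp at he
      have : (i : ℝ) = j := by linarith
      exact_mod_cast this
  have hPR : P = R := by
    refine Polynomial.eq_of_degrees_lt_of_eval_index_eq _ hinj (hlt hPd) (hlt hRd) fun k hk => ?_
    rw [hP, hR]
    by_cases h0 : k = 0
    · simp only [v, h0, if_true]
      rw [sum_eq_single n]
      · simp
      · intro m hm hmn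
        have := mem_range.mp hm
        rw [zero_pow (by omega), mul_zero]
      · simp
    · have hk := hmem hk h0
      simp only [v, h0, if_false]
      rw [sum_choose_cos_sin, prod_eq_zero hk]
      · rw [cos_eq_zero_iff]
        refine ⟨(k : ℤ) - 1, ?_⟩
        simp only [hθ]
        push_cast
        field_simp
        ring
      · have := (hsin k hk).ne'
        field_simp
        ring
  rw [← hP, hPR, hR]
end

section
/- For every natural number n ≥ 1 and every real x ≥ 0, with b_k = 1/sin²(π(2k−1)/(4n)) for k = 1, …, n, one has Π_{k=1}^{n} ( ∫_{0}^{∞} e^{−x b_k t} e^{−t} dt ) = φ_{2n}(x); that is, φ_{2n} is the Laplace transform of the random variable K = Σ_{k=1}^{n} b_k 𝐞_k, where 𝐞_1, …, 𝐞_n are independent standard exponential variables. -/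
/-!
The `k`-th integral equals `1 / (1 + x / sin² θₖ)` with `θₖ = π (2k - 1) / (4n)`, so the claim is the
product formula `∏ (1 + x / sin² θₖ) = (G₊ ^ (2n) + G₋ ^ (2n)) / 2`, where `G± = √(1+x) ± √x`.
Both sides are the value `Tₙ(1 + 2x)` of the Chebyshev polynomial of the first kind:

* `G₊² * G₋² = 1` and `G₊² + G₋² = 2 (1 + 2x)`, and `a ^ n + b ^ n = 2 Tₙ((a + b) / 2)` whenever
  `a * b = 1` (`pow_add_pow_eq_chebyshev`);
* the roots of `Tₙ` are `cos (2 θₖ) = 1 - 2 sin² θₖ`, and dividing the factorization of `Tₙ` over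
  its roots at `1 + 2x` by the one at `1`, where `Tₙ(1) = 1`, cancels the leading coefficient and
  leaves the product (`prod_one_add_eq_chebyshev`).
-/

lemma pow_add_pow_eq_chebyshev (a b : ℝ) (hab : a * b = 1) (n : ℕ) :
    a ^ n + b ^ n = 2 * (Polynomial.Chebyshev.T ℝ n).eval ((a + b) / 2) := by
  induction n using Nat.twoStepInduction with
  | zero => norm_num
  | one => simp; ring
  | more n h0 h1 =>
    push_cast at h1 ⊢
    rw [Polynomial.Chebyshev.T_add_two]
    simp only [Polynomial.eval_sub, Polynomial.eval_mul, Polynomial.eval_X, Polynomial.eval_ofNat]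
    linear_combination (-(a ^ n + b ^ n)) * hab + (a + b) * h1 - h0

lemma eval_chebyshev_eq_prod (n : ℕ) (y : ℝ) :
    (Polynomial.Chebyshev.T ℝ n).eval y = (Polynomial.Chebyshev.T ℝ n).leadingCoeff *
      ∏ k ∈ Finset.range n, (y - Real.cos ((2 * (k : ℝ) + 1) * Real.pi / (2 * n))) := by
  have hinj := (Finset.range n).nodup_map_iff_injOn.mp
    (Polynomial.Chebyshev.roots_T_real_nodup n)
  have hcard : Multiset.card (Polynomial.Chebyshev.T ℝ n).roots
      = (Polynomial.Chebyshev.T ℝ n).natDegree := by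
    rw [Polynomial.Chebyshev.roots_T_real, Finset.card_val, Finset.card_image_of_injOn hinj]
    simp
  have h := congrArg (Polynomial.eval y)
    (Polynomial.C_leadingCoeff_mul_prod_multiset_X_sub_C hcard)
  rw [← h, Polynomial.eval_mul, Polynomial.eval_C, Polynomial.eval_multiset_prod,
    Multiset.map_map, Polynomial.Chebyshev.roots_T_real]
  congr 1
  rw [← Finset.prod_image (g := fun k : ℕ => Real.cos ((2 * (k : ℝ) + 1) * Real.pi / (2 * n)))
    (f := fun r : ℝ => y - r) hinj, Finset.prod_eq_multiset_prod]
  simp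

lemma sin_node_pos (n k : ℕ) (hk : k ∈ Finset.Icc 1 n) :
    0 < Real.sin (Real.pi * (2 * (k : ℝ) - 1) / (4 * n)) := by
  obtain ⟨h1, h2⟩ := Finset.mem_Icc.mp hk
  have h1' : (1 : ℝ) ≤ k := by exact_mod_cast h1
  have h2' : (k : ℝ) ≤ n := by exact_mod_cast h2
  have hπ := Real.pi_pos
  apply Real.sin_pos_of_pos_of_lt_pi
  · apply div_pos <;> nlinarith
  · rw [div_lt_iff₀ (by linarith)]
    nlinarith

lemma prod_one_add_eq_chebyshev (n : ℕ) (x : ℝ) :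
    ∏ k ∈ Finset.Icc 1 n, (1 + x * (1 / Real.sin (Real.pi * (2 * (k : ℝ) - 1) / (4 * n)) ^ 2))
      = (Polynomial.Chebyshev.T ℝ n).eval (1 + 2 * x) := by
  have hfactor : ∀ y : ℝ, (Polynomial.Chebyshev.T ℝ n).eval (1 + 2 * y)
      = (Polynomial.Chebyshev.T ℝ n).leadingCoeff * ∏ k ∈ Finset.Icc 1 n,
        (2 * y + 2 * Real.sin (Real.pi * (2 * (k : ℝ) - 1) / (4 * n)) ^ 2) := by
    intro y
    rw [eval_chebyshev_eq_prod, Finset.range_eq_Ico,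
      ← Finset.prod_Ico_add_right_sub_eq (c := 1)]
    congr 1
    apply Finset.prod_congr
    · ext; simp
    · intro k hk
      have h1 : 1 ≤ k := (Finset.mem_Icc.mp hk).1
      have harg : (2 * ((k - 1 : ℕ) : ℝ) + 1) * Real.pi / (2 * n)
          = 2 * (Real.pi * (2 * (k : ℝ) - 1) / (4 * n)) := by
        push_cast [h1]
        ring
      rw [harg, Real.cos_two_mul, Real.cos_sq']
      ring
  have hone := hfactor 0
  simp only [mul_zero, add_zero, Polynomial.Chebyshev.T_eval_one, zero_add] at hone
  rw [hfactor x]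
  have hsplit : ∏ k ∈ Finset.Icc 1 n,
        (2 * x + 2 * Real.sin (Real.pi * (2 * (k : ℝ) - 1) / (4 * n)) ^ 2)
      = (∏ k ∈ Finset.Icc 1 n, 2 * Real.sin (Real.pi * (2 * (k : ℝ) - 1) / (4 * n)) ^ 2) *
        ∏ k ∈ Finset.Icc 1 n,
          (1 + x * (1 / Real.sin (Real.pi * (2 * (k : ℝ) - 1) / (4 * n)) ^ 2)) := by
    rw [← Finset.prod_mul_distrib]
    refine Finset.prod_congr rfl fun k hk => ?_
    have := (sin_node_pos n k hk).ne'
    field_simp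
    ring
  rw [hsplit, ← mul_assoc, ← hone, one_mul]

theorem laplace_transform_phi_even (n : ℕ) (hn : 1 ≤ n) (x : ℝ) (hx : 0 ≤ x) :
    (∏ k ∈ Finset.Icc 1 n,
        (∫ t in Set.Ioi (0 : ℝ),
          Real.exp (-x * (1 / Real.sin (Real.pi * (2 * (k : ℝ) - 1) / (4 * n)) ^ 2) * t)
            * Real.exp (-t))) =
      2 / ((Real.sqrt (1 + x) + Real.sqrt x) ^ (2 * n)
            + (Real.sqrt (1 + x) - Real.sqrt x) ^ (2 * n)) := by
  have hint : ∀ b : ℝ, 0 ≤ b →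
      ∫ t in Set.Ioi (0 : ℝ), Real.exp (-x * b * t) * Real.exp (-t) = (1 + x * b)⁻¹ := by
    intro b hb
    have hpos : 0 < 1 + x * b := by positivity
    have h := integral_exp_mul_Ioi (a := -(1 + x * b)) (by linarith) 0
    simp only [mul_zero, Real.exp_zero, neg_div_neg_eq, one_div] at h
    rw [← h]
    congr 1
    ext t
    rw [← Real.exp_add]
    ring_nf
  rw [Finset.prod_congr rfl fun k _ => hint _ (by positivity), Finset.prod_inv_distrib,
    prod_one_add_eq_chebyshev]
  have hs1 := Real.sq_sqrt (show 0 ≤ 1 + x by linarith)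
  have hs2 := Real.sq_sqrt hx
  have hab : (Real.sqrt (1 + x) + Real.sqrt x) ^ 2 * (Real.sqrt (1 + x) - Real.sqrt x) ^ 2 = 1 := by
    have : (Real.sqrt (1 + x) + Real.sqrt x) * (Real.sqrt (1 + x) - Real.sqrt x) = 1 := by
      linear_combination hs1 - hs2
    rw [← mul_pow, this, one_pow]
  have hmid : ((Real.sqrt (1 + x) + Real.sqrt x) ^ 2 + (Real.sqrt (1 + x) - Real.sqrt x) ^ 2) / 2
      = 1 + 2 * x := by
    linear_combination hs1 + hs2
  rw [pow_mul, pow_mul, pow_add_pow_eq_chebyshev _ _ hab n, hmid,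
    div_mul_eq_div_div, div_self two_ne_zero, one_div]
end
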